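/- arXiv:2412.18704 — 3 statements merged into one kernel-verified Lean document; each statement's English description precedes it below -/
import Mathlib

section
/- Let n ≥ 2 and let D ⊆ ℚ^n be a Manaster–Remmel set with coordinate orders <_1,...,<_n. Then every finite set P equipped with n linear orders <_1,...,<_n embeds into (D, <_1,...,<_n): there is an injection f : P → D with p <_i q iff f(p) <_i f(q) for all i ≤ n and p, q ∈ P. Consequently, since a <_i b for all i ≤ n iff a < b in the product order, every finite partial order of dimension at most n, together with any n linear orders realizing it, embeds into D with the product order and the coordinate orders. -/
/-- `D ⊆ ℚ^n` is a Manaster–Remmel set: dense in the product topology, and any two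
distinct points of `D` differ in every coordinate. -/
def MRSet (n : ℕ) (D : Set (Fin n → ℚ)) : Prop :=
  Dense D ∧ ∀ a ∈ D, ∀ b ∈ D, a ≠ b → ∀ i : Fin n, a i ≠ b i

/-- The product (coordinatewise) strict order on `ℚ^n`. -/
def ProdLt {n : ℕ} (a b : Fin n → ℚ) : Prop :=
  (∀ i, a i ≤ b i) ∧ a ≠ b

/-!
The points of a countable linear order `P` can be assigned nonempty open intervals of a dense order,
lying in the same order as the points: embed the lexicographic product `P ×ₗ Bool` and take the
interval between the images of `(p, false)` and `(p, true)`. Doing this for each of the finitely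
many coordinate orders assigns to each `p` a nonempty open box, and any choice of a point of `D` in
each box is an embedding. Distinct points of `D` differ in every coordinate, so the product order
on `D` is the intersection of the coordinate orders.
-/

theorem exists_forall_lt_and_forall_rel_lt {P X : Type*} [Countable P]
    (r : P → P → Prop) [IsStrictTotalOrder P r]
    [LinearOrder X] [DenselyOrdered X] [Nontrivial X] :
    ∃ a b : P → X, (∀ p, a p < b p) ∧ ∀ p q, r p q → b p < a q := by
  classical
  let _ : LinearOrder P := linearOrderOfSTO r
  have : Countable (P ×ₗ Bool) := inferInstanceAs (Countable (P × Bool))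
  obtain ⟨g⟩ := Order.embedding_from_countable_to_dense (P ×ₗ Bool) X
  refine ⟨fun p => g (toLex (p, false)), fun p => g (toLex (p, true)), fun p => ?_,
    fun p q hpq => ?_⟩
  · exact g.strictMono (Prod.Lex.toLex_lt_toLex.2 (.inr ⟨rfl, Bool.false_lt_true⟩))
  · exact g.strictMono (Prod.Lex.toLex_lt_toLex.2 (.inl hpq))

section Pi

variable {ι : Type*} {X : ι → Type*}

theorem exists_mem_forall_mem_Ioo_of_dense [Finite ι] [∀ i, LinearOrder (X i)]
    [∀ i, DenselyOrdered (X i)] [∀ i, TopologicalSpace (X i)] [∀ i, OrderClosedTopology (X i)]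
    {D : Set (∀ i, X i)} (hD : Dense D) {a b : ∀ i, X i} (hab : ∀ i, a i < b i) :
    ∃ x ∈ D, ∀ i, x i ∈ Set.Ioo (a i) (b i) := by
  have box_open : IsOpen (Set.univ.pi fun i => Set.Ioo (a i) (b i)) :=
    isOpen_set_pi Set.finite_univ fun _ _ => isOpen_Ioo
  have box_nonempty : (Set.univ.pi fun i => Set.Ioo (a i) (b i)).Nonempty :=
    Set.univ_pi_nonempty_iff.2 fun i => Set.nonempty_Ioo.2 (hab i)
  obtain ⟨x, hx, hxD⟩ := hD.inter_open_nonempty _ box_open box_nonempty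
  exact ⟨x, hxD, Set.mem_univ_pi.1 hx⟩

theorem exists_forall_mem_forall_rel_iff_lt_of_dense [Finite ι] [∀ i, LinearOrder (X i)]
    [∀ i, DenselyOrdered (X i)] [∀ i, Nontrivial (X i)] [∀ i, TopologicalSpace (X i)]
    [∀ i, OrderClosedTopology (X i)] {D : Set (∀ i, X i)} (hD : Dense D)
    {P : Type*} [Countable P] (L : ι → P → P → Prop) [∀ i, IsStrictTotalOrder P (L i)] :
    ∃ f : P → ∀ i, X i, (∀ p, f p ∈ D) ∧ ∀ i p q, L i p q ↔ f p i < f q i := by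
  choose a b hab hba using fun i => exists_forall_lt_and_forall_rel_lt (X := X i) (L i)
  choose f hfD hf using fun p => exists_mem_forall_mem_Ioo_of_dense hD fun i => hab i p
  have lt_of_rel (i : ι) (p q : P) (hpq : L i p q) : f p i < f q i :=
    calc f p i < b i p := (hf p i).2
      _ < a i q := hba i p q hpq
      _ < f q i := (hf q i).1
  exact ⟨f, hfD, fun i p q => (RelEmbedding.ofMonotone (f · i) (lt_of_rel i)).map_rel_iff.symm⟩

theorem injective_of_forall_rel_iff_lt [Nonempty ι] [∀ i, Preorder (X i)] {P : Type*}
    {L : ι → P → P → Prop} [∀ i, Std.Trichotomous (L i)] {f : P → ∀ i, X i}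
    (hf : ∀ i p q, L i p q ↔ f p i < f q i) : Function.Injective f := by
  intro p q hpq
  obtain ⟨i⟩ := ‹Nonempty ι›
  have not_rel : ¬ L i p q ∧ ¬ L i q p := by simp [hf, hpq]
  exact Std.Trichotomous.trichotomous p q not_rel.1 not_rel.2

theorem lt_iff_forall_lt_of_pairwise_ne [Nonempty ι] [∀ i, PartialOrder (X i)]
    {D : Set (∀ i, X i)} (hD : D.Pairwise fun a b => ∀ i, a i ≠ b i)
    {a b : ∀ i, X i} (ha : a ∈ D) (hb : b ∈ D) : a < b ↔ ∀ i, a i < b i :=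
  ⟨fun hab i => (hab.le i).lt_of_ne (hD ha hb hab.ne i), lt_of_strongLT⟩

theorem stmt_5_general [Finite ι] [Nonempty ι] [∀ i, LinearOrder (X i)]
    [∀ i, DenselyOrdered (X i)] [∀ i, Nontrivial (X i)] [∀ i, TopologicalSpace (X i)]
    [∀ i, OrderClosedTopology (X i)] {D : Set (∀ i, X i)} (hD : Dense D)
    (hDne : D.Pairwise fun a b => ∀ i, a i ≠ b i)
    {P : Type*} [Countable P] (L : ι → P → P → Prop) [∀ i, IsStrictTotalOrder P (L i)] :
    ∃ f : P → ∀ i, X i, (∀ p, f p ∈ D) ∧ Function.Injective f ∧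
      (∀ i p q, L i p q ↔ f p i < f q i) ∧
      ∀ r : P → P → Prop, (∀ p q, r p q ↔ ∀ i, L i p q) → ∀ p q, r p q ↔ f p < f q := by
  obtain ⟨f, hfD, hf⟩ := exists_forall_mem_forall_rel_iff_lt_of_dense hD L
  refine ⟨f, hfD, injective_of_forall_rel_iff_lt hf, hf, fun r hr p q => ?_⟩
  calc r p q ↔ ∀ i, L i p q := hr p q
    _ ↔ ∀ i, f p i < f q i := forall_congr' fun i => hf i p q
    _ ↔ f p < f q := (lt_iff_forall_lt_of_pairwise_ne hDne (hfD p) (hfD q)).symm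

end Pi

theorem prodLt_iff_lt {n : ℕ} {a b : Fin n → ℚ} : ProdLt a b ↔ a < b :=
  (lt_iff_le_and_ne (a := a) (b := b)).symm

/-- every finite set `P` with `n` linear orders embeds into
`(D, <_1, …, <_n)`; consequently every finite partial order of dimension at most `n`,
together with any `n` linear orders realizing it, embeds into `D` with the product order
and the coordinate orders. -/
theorem stmt_5 (n : ℕ) (hn : 2 ≤ n) (D : Set (Fin n → ℚ)) (hD : MRSet n D)
    (P : Type) [Fintype P] (L : Fin n → P → P → Prop)
    (hL : ∀ i, IsStrictTotalOrder P (L i)) :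
    ∃ f : P → (Fin n → ℚ), (∀ p, f p ∈ D) ∧ Function.Injective f ∧
      (∀ i : Fin n, ∀ p q : P, L i p q ↔ f p i < f q i) ∧
      ∀ r : P → P → Prop, (∀ p q, r p q ↔ ∀ i, L i p q) →
        ∀ p q : P, r p q ↔ ProdLt (f p) (f q) := by
  have : NeZero n := ⟨by omega⟩
  simpa only [prodLt_iff_lt] using stmt_5_general hD.1 hD.2 L
end

section
/- Let n ≥ 2 and let D ⊆ ℚ^n be a Manaster–Remmel set. If ≺_1,...,≺_n are linear orders on D whose intersection is the restriction to D of the product order, then there exists a permutation σ of {1,...,n} such that for all i ≤ n and all a, b ∈ D: a_i < b_i iff a ≺_σ(i) b. That is, every n-tuple of realizers of the product order on D is a permutation of the n coordinate orders. -/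
/-!
If a linear extension `≺` of a partial order reverses both `(a, b)` and `(c, d)`, that is `b ≺ a`
and `d ≺ c`, then `a < d` and `c < b` cannot both hold. So the `n` pairs of a crown (a copy of the
standard example of an `n`-dimensional order) are reversed by different members of a realizer, and
a realizer of size `n` has exactly one member for each of them.

Density provides many crowns whose `k`-th pair is reversed only in coordinate `k`. Moreover, any
two pairs reversed in coordinate `i` that jump over a fixed box in all other coordinates are
completed to crowns by the same pairs for `k ≠ i`, hence they are reversed by the same member of
the realizer. If `a i < b i`, then such a pair `(y, x)` can be found with `a < x` and `y < b`, so
the member belonging to `i` gives `a < x ≺ y < b`.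
-/

open Set Function

section Realizer

variable {ι κ P : Type*} [Preorder P] {R : κ → P → P → Prop} {j : κ} {a b : P}

/-- A realizer of the order on `P`: a family of strict linear orders whose intersection is `<`. -/
structure IsRealizer_s17 (R : κ → P → P → Prop) : Prop where
  isStrictTotalOrder : ∀ j, IsStrictTotalOrder P (R j)
  lt_iff : ∀ a b, a < b ↔ ∀ j, R j a b

namespace IsRealizer_s17

theorem irrefl (hR : IsRealizer_s17 R) (j : κ) (a : P) : ¬ R j a a :=
  (hR.isStrictTotalOrder j).irrefl a

theorem trans (hR : IsRealizer_s17 R) {c : P} (hab : R j a b) (hbc : R j b c) : R j a c :=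
  (hR.isStrictTotalOrder j).trans a b c hab hbc

theorem rel_of_lt (hR : IsRealizer_s17 R) (hab : a < b) (j : κ) : R j a b :=
  (hR.lt_iff a b).1 hab j

theorem exists_rel_of_not_le (hR : IsRealizer_s17 R) (hab : ¬ a ≤ b) : ∃ j, R j b a := by
  by_contra! hba
  refine hab ((hR.lt_iff a b).2 fun j => ?_).le
  by_contra hnab
  exact hab ((hR.isStrictTotalOrder j).trichotomous a b hnab (hba j)).le

theorem not_rel_of_lt_of_lt (hR : IsRealizer_s17 R) {c d : P} (had : a < d) (hcb : c < b)
    (hba : R j b a) : ¬ R j d c := fun hdc =>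
  hR.irrefl j b <|
    hR.trans hba <| hR.trans (hR.rel_of_lt had j) <| hR.trans hdc (hR.rel_of_lt hcb j)

end IsRealizer_s17

/-- The points `c k`, `d k` form a copy of the standard example: `c k < d m` for `k ≠ m`, while
`c k` does not lie below `d k`. -/
structure IsCrown (c d : ι → P) : Prop where
  lt : ∀ ⦃k m⦄, k ≠ m → c k < d m
  not_le : ∀ k, ¬ c k ≤ d k

namespace IsCrown

variable {c d : ι → P}

theorem injective_of_rel (hcd : IsCrown c d) (hR : IsRealizer_s17 R) {t : ι → κ}
    (ht : ∀ k, R (t k) (d k) (c k)) : Injective t := by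
  intro k m hkm
  by_contra hne
  exact hR.not_rel_of_lt_of_lt (hcd.lt hne) (hcd.lt (Ne.symm hne)) (ht k) (hkm ▸ ht m)

theorem exists_bijective_rel [Finite κ] (hcd : IsCrown c d) (hR : IsRealizer_s17 R)
    (hκ : Nat.card κ ≤ Nat.card ι) :
    ∃ t : ι → κ, Bijective t ∧ ∀ k, R (t k) (d k) (c k) := by
  choose t ht using fun k => hR.exists_rel_of_not_le (hcd.not_le k)
  exact ⟨t, (hcd.injective_of_rel hR ht).bijective_of_nat_card_le hκ, ht⟩

end IsCrown

theorem IsRealizer_s17.eq_of_rel_of_lt_of_lt (hR : IsRealizer_s17 R) {c d : ι → P} {t : ι → κ}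
    (ht : Surjective t) (hdc : ∀ k, R (t k) (d k) (c k)) {i : ι}
    (had : ∀ k ≠ i, a < d k) (hcb : ∀ k ≠ i, c k < b) (hba : R j b a) : j = t i := by
  obtain ⟨k, rfl⟩ := ht j
  by_contra hne
  have hki : k ≠ i := fun hki => hne (congrArg t hki)
  exact hR.not_rel_of_lt_of_lt (had k hki) (hcb k hki) hba (hdc k)

end Realizer

section Spike

variable {ι : Type*} {α : ι → Type*} [∀ i, Preorder (α i)] {i k : ι} {lo hi L U : ∀ i, α i}
  {a b c : ∀ i, α i}

/-- The pair `(a, b)` is reversed in coordinate `k`, where `p < b k < a k < q`, while in every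
other coordinate `a` lies below `L` and `b` lies above `U`. -/
structure IsSpikePair (k : ι) (p q : α k) (L U a b : ∀ i, α i) : Prop where
  lt_right : p < b k
  right_lt_left : b k < a k
  left_lt : a k < q
  left_lt_of_ne : ∀ l ≠ k, a l < L l
  lt_right_of_ne : ∀ l ≠ k, U l < b l

namespace IsSpikePair

variable {p q : α k}

theorem not_le (h : IsSpikePair k p q L U a b) : ¬ a ≤ b := fun hab =>
  (hab k).not_gt h.right_lt_left

theorem mono (h : IsSpikePair k p q L U a b) (hL : L ≤ lo) (hU : hi ≤ U) :
    IsSpikePair k p q lo hi a b where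
  __ := h
  left_lt_of_ne l hl := (h.left_lt_of_ne l hl).trans_le (hL l)
  lt_right_of_ne l hl := (hU l).trans_lt (h.lt_right_of_ne l hl)

theorem left_strongLT (h : IsSpikePair k p q L U a b) (hL : L ≤ c) (hq : q ≤ c k) :
    StrongLT a c := by
  intro l
  obtain rfl | hl := eq_or_ne l k
  · exact h.left_lt.trans_le hq
  · exact (h.left_lt_of_ne l hl).trans_le (hL l)

theorem strongLT_right (h : IsSpikePair k p q L U a b) (hU : c ≤ U) (hp : c k ≤ p) :
    StrongLT c b := by
  intro l
  obtain rfl | hl := eq_or_ne l k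
  · exact hp.trans_lt h.lt_right
  · exact (hU l).trans_lt (h.lt_right_of_ne l hl)

end IsSpikePair

/-- A family with one spike pair for each coordinate, reversed inside the box `(lo, hi)` and
otherwise reaching below `L` and above `U`. -/
def IsSpikeFamily (lo hi L U : ∀ i, α i) (c d : ι → ∀ i, α i) : Prop :=
  ∀ k, IsSpikePair k (lo k) (hi k) L U (c k) (d k)

namespace IsSpikeFamily

variable {c d : ι → ∀ i, α i} {p q : α i}

theorem left_lt_of_isSpikePair (hcd : IsSpikeFamily lo hi L U c d)
    (hab : IsSpikePair i p q lo hi a b) (hki : k ≠ i) (hb : L ≤ b) : c k < b :=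
  have : Nonempty ι := ⟨i⟩
  ((hcd k).left_strongLT hb (hab.lt_right_of_ne k hki).le).lt

theorem lt_right_of_isSpikePair (hcd : IsSpikeFamily lo hi L U c d)
    (hab : IsSpikePair i p q lo hi a b) (hki : k ≠ i) (ha : a ≤ U) : a < d k :=
  have : Nonempty ι := ⟨i⟩
  ((hcd k).strongLT_right ha (hab.left_lt_of_ne k hki).le).lt

theorem isCrown (hcd : IsSpikeFamily lo hi L U c d) (hlohi : lo ≤ hi) (hL : L ≤ lo)
    (hU : hi ≤ U) : IsCrown c d where
  lt k m hkm := by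
    have hle : c k ≤ hi := ((hcd k).left_strongLT (hL.trans hlohi) le_rfl).le
    exact hcd.lt_right_of_isSpikePair ((hcd k).mono hL hU) hkm.symm (hle.trans hU)
  not_le k := (hcd k).not_le

end IsSpikeFamily

end Spike

section Dense

variable {ι κ : Type*} {α : ι → Type*} [Finite ι] [∀ i, TopologicalSpace (α i)]
  {D : Set (∀ i, α i)}

theorem exists_mem_and_forall_ne_mem_of_dense (hD : Dense D) {k : ι} {V : Set (α k)}
    {W : ∀ i, Set (α i)} (hVo : IsOpen V) (hV : V.Nonempty) (hWo : ∀ i, IsOpen (W i))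
    (hW : ∀ i, (W i).Nonempty) : ∃ x : D, x.1 k ∈ V ∧ ∀ l ≠ k, x.1 l ∈ W l := by
  classical
  have hopen : IsOpen (univ.pi (update W k V)) :=
    isOpen_set_pi finite_univ fun i _ =>
      (forall_update_iff W fun _ s => IsOpen s).2 ⟨hVo, fun l _ => hWo l⟩ i
  have hne : (univ.pi (update W k V)).Nonempty :=
    univ_pi_nonempty_iff.2 ((forall_update_iff W fun _ s => s.Nonempty).2 ⟨hV, fun l _ => hW l⟩)
  obtain ⟨x, hx, hxD⟩ := hD.inter_open_nonempty _ hopen hne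
  exact ⟨⟨x, hxD⟩, (forall_update_iff W fun l s => x l ∈ s).1 (mem_univ_pi.1 hx)⟩

variable [∀ i, LinearOrder (α i)] [∀ i, OrderClosedTopology (α i)] [∀ i, DenselyOrdered (α i)]
  [∀ i, NoMinOrder (α i)] [∀ i, NoMaxOrder (α i)] {lo hi : ∀ i, α i}

theorem exists_isSpikePair_of_dense (hD : Dense D) {k : ι} {p q : α k} (hpq : p < q)
    (L U : ∀ i, α i) : ∃ a b : D, IsSpikePair k p q L U a b := by
  obtain ⟨m, hpm, hmq⟩ := exists_between hpq
  obtain ⟨a, ⟨hma, haq⟩, haL⟩ := exists_mem_and_forall_ne_mem_of_dense hD isOpen_Ioo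
    (nonempty_Ioo.2 hmq) (fun l => isOpen_Iio (a := L l)) fun _ => nonempty_Iio
  obtain ⟨b, ⟨hpb, hbm⟩, hUb⟩ := exists_mem_and_forall_ne_mem_of_dense hD isOpen_Ioo
    (nonempty_Ioo.2 hpm) (fun l => isOpen_Ioi (a := U l)) fun _ => nonempty_Ioi
  exact ⟨a, b, hpb, hbm.trans hma, haq, haL, hUb⟩

theorem exists_isSpikeFamily_isCrown_of_dense (hD : Dense D) (hlohi : StrongLT lo hi)
    {L U : ∀ i, α i} (hL : L ≤ lo) (hU : hi ≤ U) :
    ∃ c d : ι → D, IsSpikeFamily lo hi L U (fun k => c k) (fun k => d k) ∧ IsCrown c d := by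
  choose c d hcd using fun k => exists_isSpikePair_of_dense hD (hlohi k) L U
  have hcrown := IsSpikeFamily.isCrown hcd hlohi.le hL hU
  exact ⟨c, d, hcd, fun _ _ hkm => hcrown.lt hkm, hcrown.not_le⟩

variable [Finite κ] {R : κ → D → D → Prop}

namespace IsRealizer_s17

variable {i : ι} {p q : α i} {a b : D} {j : κ}

theorem eq_of_rel_of_isSpikePair (hR : IsRealizer_s17 R) (hD : Dense D)
    (hκ : Nat.card κ ≤ Nat.card ι) (hlohi : StrongLT lo hi) {p' q' : α i} {a' b' : D} {j' : κ}
    (hab : IsSpikePair i p q lo hi a b) (hab' : IsSpikePair i p' q' lo hi a' b')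
    (hj : R j b a) (hj' : R j' b' a') : j = j' := by
  obtain ⟨c, d, hcd, hcrown⟩ := exists_isSpikeFamily_isCrown_of_dense hD hlohi
    (L := lo ⊓ (b ⊓ b')) (U := hi ⊔ (a ⊔ a')) inf_le_left le_sup_left
  obtain ⟨t, ht, hdc⟩ := hcrown.exists_bijective_rel hR hκ
  have hjt : j = t i := hR.eq_of_rel_of_lt_of_lt ht.surjective hdc
    (fun k hk => hcd.lt_right_of_isSpikePair hab hk (le_sup_left.trans le_sup_right))
    (fun k hk => hcd.left_lt_of_isSpikePair hab hk (inf_le_right.trans inf_le_left)) hj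
  have hjt' : j' = t i := hR.eq_of_rel_of_lt_of_lt ht.surjective hdc
    (fun k hk => hcd.lt_right_of_isSpikePair hab' hk (le_sup_right.trans le_sup_right))
    (fun k hk => hcd.left_lt_of_isSpikePair hab' hk (inf_le_right.trans inf_le_right)) hj'
  exact hjt.trans hjt'.symm

theorem rel_of_apply_lt (hR : IsRealizer_s17 R) (hD : Dense D) (hκ : Nat.card κ ≤ Nat.card ι)
    (hlohi : StrongLT lo hi) (hab : IsSpikePair i p q lo hi a b) (hj : R j b a) {v w : D}
    (hvw : v.1 i < w.1 i) : R j v w := by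
  have : Nonempty ι := ⟨i⟩
  obtain ⟨y, x, hyx⟩ := exists_isSpikePair_of_dense hD hvw (lo ⊓ w) (hi ⊔ v)
  have hvx : v < x := (hyx.strongLT_right le_sup_right le_rfl).lt
  have hyw : y < w := (hyx.left_strongLT inf_le_right le_rfl).lt
  have hxy : R j x y := by
    obtain ⟨j', hj'⟩ := hR.exists_rel_of_not_le (a := y) (b := x) hyx.not_le
    rwa [hR.eq_of_rel_of_isSpikePair hD hκ hlohi hab (hyx.mono inf_le_left le_sup_left) hj hj']
  exact hR.trans (hR.rel_of_lt hvx j) (hR.trans hxy (hR.rel_of_lt hyw j))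

end IsRealizer_s17

theorem stmt_17_general [∀ i, Nonempty (α i)] (hD : Dense D)
    (hne : D.Pairwise fun a b => ∀ i, a i ≠ b i) (hκ : Nat.card κ ≤ Nat.card ι)
    (hR : IsRealizer_s17 R) :
    ∃ σ : ι ≃ κ, ∀ (i : ι) (a b : D), a.1 i < b.1 i ↔ R (σ i) a b := by
  obtain ⟨lo⟩ : Nonempty (∀ i, α i) := inferInstance
  choose hi hlohi using fun i => exists_gt (lo i)
  obtain ⟨c, d, hcd, hcrown⟩ := exists_isSpikeFamily_isCrown_of_dense hD hlohi le_rfl le_rfl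
  obtain ⟨σ, hσ, hdc⟩ := hcrown.exists_bijective_rel hR hκ
  have rel_of_lt (i : ι) {a b : D} (hab : a.1 i < b.1 i) : R (σ i) a b :=
    hR.rel_of_apply_lt hD hκ hlohi (hcd i) (hdc i) hab
  refine ⟨Equiv.ofBijective σ hσ, fun i a b => ⟨rel_of_lt i, fun hab => ?_⟩⟩
  have hne_ab : a.1 ≠ b.1 := fun heq => hR.irrefl (σ i) a (Subtype.ext heq ▸ hab)
  refine (hne a.2 b.2 hne_ab i).lt_or_gt.resolve_right fun hba => ?_
  exact hR.irrefl (σ i) a (hR.trans hab (rel_of_lt i hba))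

end Dense

/-- every `n`-tuple of realizers of the product order on a Manaster–Remmel
set `D` is a permutation of the `n` coordinate orders: there is `σ ∈ S_n` with
`a_i < b_i ↔ a ≺_{σ(i)} b` for all `i` and `a, b ∈ D`. -/
theorem stmt_17 (n : ℕ) (hn : 2 ≤ n) (D : Set (Fin n → ℚ)) (hD : MRSet n D)
    (R : Fin n → ↥D → ↥D → Prop)
    (hR : ∀ i, IsStrictTotalOrder ↥D (R i))
    (hreal : ∀ a b : ↥D, ProdLt (a : Fin n → ℚ) (b : Fin n → ℚ) ↔ ∀ j, R j a b) :
    ∃ σ : Equiv.Perm (Fin n),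
      ∀ (i : Fin n) (a b : ↥D),
        (a : Fin n → ℚ) i < (b : Fin n → ℚ) i ↔ R (σ i) a b :=
  stmt_17_general hD.1 (fun a ha b hb => hD.2 a ha b hb) le_rfl
    ⟨hR, fun a b => (lt_iff_le_and_ne (a := a.1) (b := b.1)).trans (hreal a b)⟩
end

section
/- Let n ≥ 2 and let D ⊆ ℚ^n be a Manaster–Remmel set, with < the restriction to D of the product order and <_1,...,<_n its coordinate orders. Let G be the group of all bijections g : D → D with a < b iff g(a) < g(b). Then G acts transitively on the set R_n of all n-tuples (≺_1,...,≺_n) of linear orders on D whose intersection is <, via the logic action (g·(≺_1,...,≺_n)) = (≺_1^g,...,≺_n^g) where a ≺_i^g b iff g⁻¹(a) ≺_i g⁻¹(b); in particular this action is well-defined (it sends realizer tuples to realizer tuples), and for every (≺_1,...,≺_n) ∈ R_n there is g ∈ G with a ≺_i b iff g⁻¹(a) <_i g⁻¹(b) for all i ≤ n and a, b ∈ D. -/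
/-- `g` is an automorphism of `(D, <)`: it preserves and reflects the product order. -/
def PresProd (n : ℕ) (D : Set (Fin n → ℚ)) (g : Equiv.Perm ↥D) : Prop :=
  ∀ a b : ↥D, ProdLt (a : Fin n → ℚ) (b : Fin n → ℚ) ↔
    ProdLt (g a : Fin n → ℚ) (g b : Fin n → ℚ)

/-- `R` is an `n`-tuple of linear orders on `D` whose intersection is the product order. -/
def IsRealizer (n : ℕ) (D : Set (Fin n → ℚ)) (R : Fin n → ↥D → ↥D → Prop) : Prop :=
  (∀ i, IsStrictTotalOrder ↥D (R i)) ∧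
    ∀ a b : ↥D, ProdLt (a : Fin n → ℚ) (b : Fin n → ℚ) ↔ ∀ j, R j a b

/-!
Call a family of strict linear orders on `X` generic if every system of consistent finite bounds,
one for each order of the family, has a common solution. The coordinate orders of a
Manaster–Remmel set are generic, and any two generic families on countable sets are isomorphic by
back-and-forth. So it suffices that every realizer is generic, which holds because it is a
permutation of the coordinate orders.

For the latter, write `S i` for the `i`-th coordinate order and surround a finite set `F` by
points `c j`, `d j` such that `d j` lies below `c j` in the `j`-th order only. Every realizer `R`
has an index `f j` with `R (f j) (d j) (c j)`, and an alternating-cycle argument makes `f`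
injective, hence a permutation. If `S i a b` with `a, b ∈ F`, take `x` above `a` and all `c j`
with `j ≠ i`, yet below `b` in the `i`-th order. An index with `R m x b` is some `f j`, and
`j ≠ i` would produce a cycle, so `R (f i) a b`. As there are finitely many permutations, one of
them works for all finite `F`.
-/

section

open Set

variable {ι X Y : Type*}

/-- A family `S` of relations on `X`, thought of as strict linear orders, is generic if finite sets
of lower and upper bounds, chosen independently for each relation of the family and consistent with
it, can be met by a single point. Empty sets of bounds are allowed, so that for linear orders this
subsumes density and the absence of endpoints. -/
def IsGenericFamily (S : ι → X → X → Prop) : Prop :=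
  ∀ L U : ι → Set X, (∀ i, (L i).Finite) → (∀ i, (U i).Finite) →
    (∀ i, ∀ a ∈ L i, ∀ b ∈ U i, S i a b) →
    ∃ x, ∀ i, (∀ a ∈ L i, S i a x) ∧ ∀ b ∈ U i, S i x b

/-- The tuple `R` of strict linear orders is a realizer of the relation `lt`, that is, its
intersection is `lt`. -/
def IsRealizerOf (lt : X → X → Prop) (R : ι → X → X → Prop) : Prop :=
  (∀ i, IsStrictTotalOrder X (R i)) ∧ ∀ a b, lt a b ↔ ∀ j, R j a b

/-- The set `f` of pairs is the graph of a partial isomorphism between the families `R` and `S`.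
That `f` is the graph of an injective function is not part of the definition; for a nonempty family
of strict linear orders it is a consequence. -/
def IsPartialIso (R : ι → X → X → Prop) (S : ι → Y → Y → Prop) (f : Set (X × Y)) : Prop :=
  ∀ p ∈ f, ∀ q ∈ f, ∀ i, R i p.1 q.1 ↔ S i p.2 q.2

theorem rel_iff_rel_of_imp {r : X → X → Prop} {s : Y → Y → Prop} [Std.Trichotomous r] [Std.Asymm s]
    {a b : X} {c d : Y} (hab : a ≠ b) (h : r a b → s c d) (h' : r b a → s d c) :
    r a b ↔ s c d := by
  refine ⟨h, fun hcd => ?_⟩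
  rcases trichotomous_of r a b with hr | hr | hr
  · exact hr
  · exact absurd hr hab
  · exact absurd hcd (asymm_of s (h' hr))

namespace IsPartialIso

variable {R : ι → X → X → Prop} {S : ι → Y → Y → Prop} {f : Set (X × Y)}

theorem swap (hf : IsPartialIso R S f) : IsPartialIso S R (Prod.swap ⁻¹' f) :=
  fun p hp q hq i => (hf p.swap hp q.swap hq i).symm

theorem insert [∀ i, Std.Irrefl (R i)] [∀ i, Std.Irrefl (S i)] {a : X} {b : Y}
    (hf : IsPartialIso R S f) (hleft : ∀ p ∈ f, ∀ i, R i p.1 a ↔ S i p.2 b)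
    (hright : ∀ p ∈ f, ∀ i, R i a p.1 ↔ S i b p.2) : IsPartialIso R S (insert (a, b) f) := by
  rintro p (rfl | hp) q (rfl | hq) i
  · exact iff_of_false (irrefl_of (R i) a) (irrefl_of (S i) b)
  · exact hright q hq i
  · exact hleft p hp i
  · exact hf p hp q hq i

theorem fst_eq_iff_snd_eq [Nonempty ι] [∀ i, IsStrictTotalOrder X (R i)]
    [∀ i, IsStrictTotalOrder Y (S i)] (hf : IsPartialIso R S f) {p q : X × Y} (hp : p ∈ f)
    (hq : q ∈ f) : p.1 = q.1 ↔ p.2 = q.2 := by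
  obtain ⟨i⟩ := ‹Nonempty ι›
  have hpq := hf p hp q hq i
  have hqp := hf q hq p hp i
  constructor <;> intro heq
  · rw [heq] at hpq hqp
    exact Std.Trichotomous.trichotomous (r := S i) _ _
      (mt hpq.2 (irrefl_of (R i) _)) (mt hqp.2 (irrefl_of (R i) _))
  · rw [heq] at hpq hqp
    exact Std.Trichotomous.trichotomous (r := R i) _ _
      (mt hpq.1 (irrefl_of (S i) _)) (mt hqp.1 (irrefl_of (S i) _))

theorem exists_equiv [Nonempty ι] [∀ i, IsStrictTotalOrder X (R i)]
    [∀ i, IsStrictTotalOrder Y (S i)] (hf : IsPartialIso R S f) (hdom : ∀ a, ∃ b, (a, b) ∈ f)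
    (hran : ∀ b, ∃ a, (a, b) ∈ f) : ∃ e : X ≃ Y, ∀ i a b, R i a b ↔ S i (e a) (e b) := by
  choose F hF using hdom
  choose G hG using hran
  exact ⟨⟨F, G, fun a => (hf.fst_eq_iff_snd_eq (hG (F a)) (hF a)).2 rfl,
    fun b => (hf.fst_eq_iff_snd_eq (hF (G b)) (hG b)).1 rfl⟩,
    fun i a b => hf _ (hF a) _ (hF b) i⟩

end IsPartialIso

section BackAndForth

variable {R : ι → X → X → Prop} {S : ι → Y → Y → Prop} {f : Set (X × Y)}
  [∀ i, IsStrictTotalOrder X (R i)] [∀ i, IsStrictTotalOrder Y (S i)]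

theorem IsGenericFamily.exists_extend_dom (hS : IsGenericFamily S) (hfin : f.Finite)
    (hf : IsPartialIso R S f) (a : X) :
    ∃ g, (g.Finite ∧ IsPartialIso R S g) ∧ f ⊆ g ∧ ∃ b, (a, b) ∈ g := by
  by_cases ha : ∃ b, (a, b) ∈ f
  · exact ⟨f, ⟨hfin, hf⟩, subset_rfl, ha⟩
  have hne : ∀ p ∈ f, p.1 ≠ a := fun p hp hpa => ha ⟨p.2, hpa ▸ hp⟩
  obtain ⟨b, hb⟩ := hS (fun i => Prod.snd '' {p ∈ f | R i p.1 a})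
    (fun i => Prod.snd '' {p ∈ f | R i a p.1}) (fun i => (hfin.sep _).image _)
    (fun i => (hfin.sep _).image _) (by
      rintro i _ ⟨p, ⟨hp, hpa⟩, rfl⟩ _ ⟨q, ⟨hq, haq⟩, rfl⟩
      exact (hf p hp q hq i).1 (trans_of (R i) hpa haq))
  have hbelow : ∀ p ∈ f, ∀ i, R i p.1 a → S i p.2 b :=
    fun p hp i hpa => (hb i).1 _ ⟨p, ⟨hp, hpa⟩, rfl⟩
  have habove : ∀ p ∈ f, ∀ i, R i a p.1 → S i b p.2 :=
    fun p hp i hap => (hb i).2 _ ⟨p, ⟨hp, hap⟩, rfl⟩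
  refine ⟨insert (a, b) f, ⟨hfin.insert _, hf.insert ?_ ?_⟩, subset_insert _ _, b,
    mem_insert _ _⟩
  · exact fun p hp i => rel_iff_rel_of_imp (hne p hp) (hbelow p hp i) (habove p hp i)
  · exact fun p hp i => rel_iff_rel_of_imp (hne p hp).symm (habove p hp i) (hbelow p hp i)

theorem IsGenericFamily.exists_extend_ran (hR : IsGenericFamily R) (hfin : f.Finite)
    (hf : IsPartialIso R S f) (b : Y) :
    ∃ g, (g.Finite ∧ IsPartialIso R S g) ∧ f ⊆ g ∧ ∃ a, (a, b) ∈ g := by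
  obtain ⟨g, ⟨hgfin, hg⟩, hfg, a, ha⟩ :=
    hR.exists_extend_dom (hfin.preimage Prod.swap_injective.injOn) hf.swap b
  exact ⟨Prod.swap ⁻¹' g, ⟨hgfin.preimage Prod.swap_injective.injOn, hg.swap⟩,
    fun p hp => hfg (a := p.swap) hp, a, ha⟩

theorem IsGenericFamily.exists_isPartialIso_total [Countable X] [Countable Y]
    (hR : IsGenericFamily R) (hS : IsGenericFamily S) :
    ∃ f, IsPartialIso R S f ∧ (∀ a, ∃ b, (a, b) ∈ f) ∧ ∀ b, ∃ a, (a, b) ∈ f := by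
  let P := {f : Set (X × Y) // f.Finite ∧ IsPartialIso R S f}
  let empty : P := ⟨∅, finite_empty, fun _ hp => hp.elim⟩
  let definedAt : X ⊕ Y → Order.Cofinal P := Sum.elim
    (fun a => ⟨{f | ∃ b, (a, b) ∈ f.1}, fun f =>
      have ⟨g, hg, hfg, h⟩ := hS.exists_extend_dom f.2.1 f.2.2 a
      ⟨⟨g, hg⟩, h, hfg⟩⟩)
    (fun b => ⟨{f | ∃ a, (a, b) ∈ f.1}, fun f =>
      have ⟨g, hg, hfg, h⟩ := hR.exists_extend_ran f.2.1 f.2.2 b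
      ⟨⟨g, hg⟩, h, hfg⟩⟩)
  let _ := Encodable.ofCountable (X ⊕ Y)
  let I := Order.idealOfCofinals empty definedAt
  have hmeets := Order.cofinal_meets_idealOfCofinals empty definedAt
  refine ⟨⋃ f ∈ I, f.1, fun p hp q hq i => ?_, fun a => ?_, fun b => ?_⟩
  · obtain ⟨f, hfI, hpf⟩ := mem_iUnion₂.1 hp
    obtain ⟨g, hgI, hqg⟩ := mem_iUnion₂.1 hq
    obtain ⟨k, -, hfk, hgk⟩ := I.directed f hfI g hgI
    exact k.2.2 p (hfk hpf) q (hgk hqg) i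
  · obtain ⟨f, ⟨b, hab⟩, hfI⟩ := hmeets (Sum.inl a)
    exact ⟨b, mem_iUnion₂.2 ⟨f, hfI, hab⟩⟩
  · obtain ⟨f, ⟨a, hab⟩, hfI⟩ := hmeets (Sum.inr b)
    exact ⟨a, mem_iUnion₂.2 ⟨f, hfI, hab⟩⟩

theorem IsGenericFamily.exists_equiv [Nonempty ι] [Countable X] [Countable Y]
    (hR : IsGenericFamily R) (hS : IsGenericFamily S) :
    ∃ e : X ≃ Y, ∀ i a b, R i a b ↔ S i (e a) (e b) :=
  have ⟨_, hf, hdom, hran⟩ := hR.exists_isPartialIso_total hS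
  hf.exists_equiv hdom hran

end BackAndForth

namespace IsGenericFamily

variable {S : ι → X → X → Prop}

theorem comp (hS : IsGenericFamily S) (σ : Equiv.Perm ι) : IsGenericFamily (S ∘ σ) := by
  intro L U hL hU hLU
  obtain ⟨x, hx⟩ := hS (L ∘ σ.symm) (U ∘ σ.symm) (fun _ => hL _) (fun _ => hU _)
    (fun i a ha b hb => by simpa using hLU (σ.symm i) a ha b hb)
  exact ⟨x, fun i => by simpa using hx (σ i)⟩

theorem exists_between_and_above (hS : IsGenericFamily S) (j : ι) {A B C : Set X} (hA : A.Finite)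
    (hB : B.Finite) (hC : C.Finite) (hAB : ∀ a ∈ A, ∀ b ∈ B, S j a b) :
    ∃ x, (∀ a ∈ A, S j a x) ∧ (∀ b ∈ B, S j x b) ∧ ∀ l ≠ j, ∀ y ∈ C, S l y x := by
  obtain ⟨x, hx⟩ := hS (fun l => {y | l = j ∧ y ∈ A ∨ l ≠ j ∧ y ∈ C}) (fun l => {y ∈ B | l = j})
    (fun _ => (hA.union hC).subset fun _ => Or.imp And.right And.right)
    (fun _ => hB.sep _) (by
      rintro l a (⟨rfl, ha⟩ | ⟨hl, -⟩) b ⟨hb, hlj⟩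
      · exact hAB a ha b hb
      · exact absurd hlj hl)
  exact ⟨x, fun a ha => (hx j).1 a (Or.inl ⟨rfl, ha⟩), fun b hb => (hx j).2 b ⟨hb, rfl⟩,
    fun l hl y hy => (hx l).1 y (Or.inr ⟨hl, hy⟩)⟩

theorem exists_above_and_below (hS : IsGenericFamily S) (j : ι) {F : Set X} (hF : F.Finite) :
    ∃ x, (∀ y ∈ F, S j y x) ∧ ∀ l ≠ j, ∀ y ∈ F, S l x y := by
  obtain ⟨x, hx⟩ := hS (fun l => {y ∈ F | l = j}) (fun l => {y ∈ F | l ≠ j})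
    (fun _ => hF.sep _) (fun _ => hF.sep _) (fun _ _ ha _ hb => absurd ha.2 hb.2)
  exact ⟨x, fun y hy => (hx j).1 y ⟨hy, rfl⟩, fun l hl y hy => (hx l).2 y ⟨hy, hl⟩⟩

theorem exists_reversed_pairs [Finite ι] [∀ i, IsTrans X (S i)] (hS : IsGenericFamily S)
    {F : Set X} (hF : F.Finite) (hne : F.Nonempty) :
    ∃ c d : ι → X, (∀ j, S j (d j) (c j)) ∧ (∀ j k, j ≠ k → ∀ l, S l (c j) (d k)) ∧
      (∀ j, ∀ l ≠ j, ∀ y ∈ F, S l (c j) y) ∧ ∀ j l, ∀ y ∈ F, S l y (d j) := by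
  choose c hFc hcF using fun j => hS.exists_above_and_below j hF
  choose d hFd hdc hd using fun j => hS.exists_between_and_above j hF (finite_singleton (c j))
    (hF.union (finite_range c)) (by simpa using hFc j)
  obtain ⟨z, hz⟩ := hne
  refine ⟨c, d, fun j => hdc j _ rfl, fun j k hjk l => ?_, hcF, fun j l y hy => ?_⟩
  · by_cases hl : l = k
    · subst hl
      exact trans_of (S l) (hcF j l hjk.symm z hz) (hFd l z hz)
    · exact hd k l hl _ (Or.inr (mem_range_self j))
  · by_cases hl : l = j
    · exact hl ▸ hFd j y hy
    · exact hd j l hl y (Or.inl hy)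

end IsGenericFamily

namespace IsRealizerOf

variable {lt : X → X → Prop} {R S : ι → X → X → Prop}

theorem of_perm (hR : IsRealizerOf lt R) {g : Equiv.Perm X} (hg : ∀ a b, lt a b ↔ lt (g a) (g b)) :
    IsRealizerOf lt fun i a b => R i (g⁻¹ a) (g⁻¹ b) := by
  refine ⟨fun i => ?_, fun a b => ?_⟩
  · have := hR.1 i
    exact (RelIso.preimage g⁻¹ (R i)).toRelEmbedding.isStrictTotalOrder
  · rw [← hR.2, hg (g⁻¹ a)]
    simp

theorem exists_rel_of_not_lt (hR : IsRealizerOf lt R) {a b : X} (hne : a ≠ b) (hlt : ¬ lt a b) :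
    ∃ k, R k b a := by
  obtain ⟨k, hk⟩ := not_forall.1 (mt (hR.2 a b).2 hlt)
  have := hR.1 k
  exact ⟨k, ((trichotomous_of (R k) a b).resolve_left hk).resolve_left hne⟩

theorem not_alternating_cycle (hR : IsRealizerOf lt R) {a b c d : X} {k : ι} (hba : R k b a)
    (had : lt a d) (hdc : R k d c) : ¬ lt c b := by
  intro hcb
  have := hR.1 k
  have hbd := trans_of (R k) hba ((hR.2 a d).1 had k)
  exact asymm_of (R k) hbd (trans_of (R k) hdc ((hR.2 c b).1 hcb k))

theorem exists_rel_of_rel (hS : IsRealizerOf lt S) (hR : IsRealizerOf lt R) {i : ι} {a b : X}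
    (h : S i a b) : ∃ k, R k a b := by
  have := hS.1 i
  exact hR.exists_rel_of_not_lt (ne_of_irrefl' h) fun hlt => asymm_of (S i) h ((hS.2 b a).1 hlt i)

theorem exists_perm_of_finite [Finite ι] (hS : IsRealizerOf lt S) (hgen : IsGenericFamily S)
    (hR : IsRealizerOf lt R) {F : Set X} (hF : F.Finite) (hne : F.Nonempty) :
    ∃ τ : Equiv.Perm ι, ∀ i, ∀ a ∈ F, ∀ b ∈ F, S i a b → R (τ i) a b := by
  have := hS.1
  obtain ⟨c, d, hdc, hcd, hcF, hFd⟩ := hgen.exists_reversed_pairs hF hne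
  choose f hf using fun j => hS.exists_rel_of_rel hR (hdc j)
  have hinj : f.Injective := by
    intro j k hjk
    by_contra hjk'
    exact hR.not_alternating_cycle (hf j) ((hS.2 _ _).2 (hcd j k hjk')) (hjk ▸ hf k)
      ((hS.2 _ _).2 (hcd k j (Ne.symm hjk')))
  have hbij : f.Bijective := Finite.injective_iff_bijective.1 hinj
  refine ⟨Equiv.ofBijective f hbij, fun i a ha b hb hab => ?_⟩
  obtain ⟨x, hax, hxb, hx⟩ := hgen.exists_between_and_above i (finite_singleton a)
    (finite_singleton b) ((finite_singleton a).union (finite_range c)) (by simpa using hab)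
  have hax' : ∀ l, S l a x := fun l => by
    by_cases hl : l = i
    · exact hl ▸ hax a rfl
    · exact hx l hl a (Or.inl rfl)
  have hcx : ∀ j ≠ i, ∀ l, S l (c j) x := fun j hj l => by
    by_cases hl : l = i
    · subst hl
      exact trans_of (S l) (hcF j l hj.symm a ha) (hax a rfl)
    · exact hx l hl _ (Or.inr (mem_range_self j))
  obtain ⟨m, hm⟩ := hS.exists_rel_of_rel hR (hxb b rfl)
  obtain ⟨j, rfl⟩ := hbij.2 m
  have hji : j = i := by
    by_contra hji
    exact hR.not_alternating_cycle hm ((hS.2 _ _).2 fun l => hFd j l b hb) (hf j)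
      ((hS.2 _ _).2 (hcx j hji))
  subst hji
  have := hR.1 (f j)
  exact trans_of (R (f j)) ((hR.2 a x).1 ((hS.2 a x).2 hax') (f j)) hm

theorem exists_perm [Finite ι] (hS : IsRealizerOf lt S) (hgen : IsGenericFamily S)
    (hR : IsRealizerOf lt R) : ∃ τ : Equiv.Perm ι, ∀ i a b, S i a b ↔ R (τ i) a b := by
  obtain ⟨τ, hτ⟩ : ∃ τ : Equiv.Perm ι, ∀ i a b, S i a b → R (τ i) a b := by
    by_contra! hbad
    choose i a b hS_ab hR_ab using hbad
    obtain ⟨τ, hτ⟩ := hS.exists_perm_of_finite hgen hR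
      ((finite_range a).union (finite_range b)) ⟨a 1, Or.inl (mem_range_self 1)⟩
    exact hR_ab τ (hτ (i τ) _ (Or.inl (mem_range_self τ)) _ (Or.inr (mem_range_self τ)) (hS_ab τ))
  refine ⟨τ, fun i a b => ?_⟩
  have := hS.1 i
  have := hR.1 (τ i)
  exact (RelEmbedding.ofMonotone id (hτ i)).map_rel_iff.symm

theorem isGenericFamily [Finite ι] (hS : IsRealizerOf lt S) (hgen : IsGenericFamily S)
    (hR : IsRealizerOf lt R) : IsGenericFamily R := by
  obtain ⟨τ, hτ⟩ := hS.exists_perm hgen hR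
  have hRS : R = S ∘ τ.symm := by
    ext i a b
    simp [hτ]
  exact hRS ▸ hgen.comp τ.symm

theorem exists_automorphism [Finite ι] [Nonempty ι] [Countable X] {R' : ι → X → X → Prop}
    (hS : IsRealizerOf lt S) (hgen : IsGenericFamily S) (hR : IsRealizerOf lt R)
    (hR' : IsRealizerOf lt R') :
    ∃ g : Equiv.Perm X, (∀ a b, lt a b ↔ lt (g a) (g b)) ∧
      ∀ i a b, R' i a b ↔ R i (g⁻¹ a) (g⁻¹ b) := by
  have := hR.1
  have := hR'.1
  obtain ⟨g, hg⟩ := (hS.isGenericFamily hgen hR).exists_equiv (hS.isGenericFamily hgen hR')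
  refine ⟨g, fun a b => ?_, fun i a b => ?_⟩
  · rw [hR.2, hR'.2]
    exact forall_congr' fun i => hg i a b
  · simp [hg]

end IsRealizerOf

theorem isGenericFamily_coord_of_dense [Finite ι] {α : ι → Type*} [∀ i, LinearOrder (α i)]
    [∀ i, TopologicalSpace (α i)] [∀ i, OrderTopology (α i)] [∀ i, DenselyOrdered (α i)]
    [∀ i, NoMinOrder (α i)] [∀ i, NoMaxOrder (α i)] [∀ i, Nonempty (α i)] {D : Set (∀ i, α i)}
    (hD : Dense D) : IsGenericFamily fun i (a b : D) => a.1 i < b.1 i := by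
  intro L U hL hU hLU
  let box (i : ι) : Set (α i) := (⋂ a ∈ L i, Ioi (a.1 i)) ∩ ⋂ b ∈ U i, Iio (b.1 i)
  have hopen : ∀ i, IsOpen (box i) := fun i =>
    ((hL i).isOpen_biInter fun _ _ => isOpen_Ioi).inter
      ((hU i).isOpen_biInter fun _ _ => isOpen_Iio)
  have hnonempty : ∀ i, (box i).Nonempty := by
    intro i
    obtain ⟨m, hLm, hmU⟩ := Order.exists_between_finsets ((hL i).toFinset.image (·.1 i))
      ((hU i).toFinset.image (·.1 i))
      (by simpa only [Finset.forall_mem_image, Finite.mem_toFinset] using hLU i)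
    simp only [Finset.forall_mem_image, Finite.mem_toFinset] at hLm hmU
    exact ⟨m, mem_iInter₂.2 fun _ ha => hLm ha, mem_iInter₂.2 fun _ hb => hmU hb⟩
  obtain ⟨x, hx, hxD⟩ := hD.inter_open_nonempty _
    (isOpen_set_pi finite_univ fun i _ => hopen i) (univ_pi_nonempty_iff.2 hnonempty)
  exact ⟨⟨x, hxD⟩, fun i => by simpa [box] using hx i (mem_univ i)⟩

theorem MRSet.isRealizerOf_coord {n : ℕ} [NeZero n] {D : Set (Fin n → ℚ)} (hD : MRSet n D) :
    IsRealizerOf (fun a b : D => ProdLt a.1 b.1) fun i (a b : D) => a.1 i < b.1 i := by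
  have hcoord : ∀ {a b : D} (i : Fin n), a.1 ≠ b.1 → a.1 i ≠ b.1 i :=
    fun {a b} i hab => hD.2 _ a.2 _ b.2 hab i
  refine ⟨fun i => ?_, fun a b => ⟨fun h i => (h.1 i).lt_of_ne (hcoord i h.2), fun h => ?_⟩⟩
  · have hinj : Function.Injective fun a : D => a.1 i :=
      fun a b hab => Subtype.ext (by_contra fun hne => hcoord i hne hab)
    exact (RelEmbedding.preimage ⟨_, hinj⟩ (· < ·)).isStrictTotalOrder
  · exact ⟨fun i => (h i).le, fun hab => (h 0).ne (congrFun hab 0)⟩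

theorem stmt_18_general [Finite ι] [Nonempty ι] [Countable X] {lt : X → X → Prop}
    {S : ι → X → X → Prop} (hS : IsRealizerOf lt S) (hgen : IsGenericFamily S) :
    (∀ g : Equiv.Perm X, (∀ a b, lt a b ↔ lt (g a) (g b)) →
      ∀ R : ι → X → X → Prop, IsRealizerOf lt R →
        IsRealizerOf lt fun i a b => R i (g⁻¹ a) (g⁻¹ b)) ∧
    (∀ R R' : ι → X → X → Prop, IsRealizerOf lt R → IsRealizerOf lt R' →
      ∃ g : Equiv.Perm X, (∀ a b, lt a b ↔ lt (g a) (g b)) ∧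
        ∀ i a b, R' i a b ↔ R i (g⁻¹ a) (g⁻¹ b)) ∧
    (∀ R : ι → X → X → Prop, IsRealizerOf lt R →
      ∃ g : Equiv.Perm X, (∀ a b, lt a b ↔ lt (g a) (g b)) ∧
        ∀ i a b, R i a b ↔ S i (g⁻¹ a) (g⁻¹ b)) :=
  ⟨fun _ hg _ hR => hR.of_perm hg, fun _ _ hR hR' => hS.exists_automorphism hgen hR hR',
    fun _ hR => hS.exists_automorphism hgen hS hR⟩

end

/-- the group `Aut(D,<)` acts on the set of realizer tuples via the logic
action: the action is well-defined, transitive, and in particular every realizer tuple is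
the image of the tuple of coordinate orders under some automorphism. -/
theorem stmt_18 (n : ℕ) (hn : 2 ≤ n) (D : Set (Fin n → ℚ)) (hD : MRSet n D) :
    (∀ g : Equiv.Perm ↥D, PresProd n D g →
      ∀ R : Fin n → ↥D → ↥D → Prop, IsRealizer n D R →
        IsRealizer n D (fun i a b => R i (g⁻¹ a) (g⁻¹ b))) ∧
    (∀ R R' : Fin n → ↥D → ↥D → Prop, IsRealizer n D R → IsRealizer n D R' →
      ∃ g : Equiv.Perm ↥D, PresProd n D g ∧
        ∀ (i : Fin n) (a b : ↥D), R' i a b ↔ R i (g⁻¹ a) (g⁻¹ b)) ∧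
    (∀ R : Fin n → ↥D → ↥D → Prop, IsRealizer n D R →
      ∃ g : Equiv.Perm ↥D, PresProd n D g ∧
        ∀ (i : Fin n) (a b : ↥D),
          R i a b ↔ (g⁻¹ a : Fin n → ℚ) i < (g⁻¹ b : Fin n → ℚ) i) := by
  have : NeZero n := ⟨by lia⟩
  exact stmt_18_general hD.isRealizerOf_coord (isGenericFamily_coord_of_dense hD.1)
end
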